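/- Let ζ be a uniform binary substitution (a substitution of constant length q ≥ 2 on {0,1}). Then for every y ∈ X_ζ and every m, ℓ ∈ ℕ, the asymptotic determinism DET_ℓ(y^{(m)}, ∞, ε) = lim_{n→∞} DET_ℓ(y^{(m)}, n, ε) exists for every sufficiently small ε > 0 and lim_{ε→0} DET_ℓ(y^{(m)}, ∞, ε) = 1. -/

import Mathlib

open Filter Topology MeasureTheory

namespace RQA

/-- The standard metric on symbolic sequences over an alphabet `α`:
`ρ(x,y) = 2^{-min{i : x i ≠ y i}}` for `x ≠ y` and `ρ(x,x) = 0`. -/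
noncomputable def seqDist {α : Type*} (x y : ℕ → α) : ℝ :=
  haveI := Classical.propDecidable (x = y)
  if x = y then 0 else (2 : ℝ) ^ (-((sInf {i : ℕ | x i ≠ y i} : ℕ) : ℤ))

/-- The (one-sided) shift on sequences. -/
def shift {α : Type*} (x : ℕ → α) : ℕ → α := fun i => x (i + 1)

/-- The embedded sequence `x^{(m)}`, a sequence over the alphabet `α^m`. -/
def embedSeq {α : Type*} (m : ℕ) (x : ℕ → α) : ℕ → (Fin m → α) :=
  fun j t => x (j + (t : ℕ))

section RQAdefs

variable {X : Type*} (d : X → X → ℝ) (f : X → X) (x : X)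

/-- The entry of the recurrence plot at `(i,j)` equals `1`. -/
def RPone (ε : ℝ) (i j : ℕ) : Prop := d (f^[i] x) (f^[j] x) ≤ ε

/-- `(i, j, l)` is a diagonal line in the recurrence plot `RP(x, n, ε)`. -/
def IsLine (n : ℕ) (ε : ℝ) (i j l : ℕ) : Prop :=
  1 ≤ l ∧ i + l ≤ n ∧ j + l ≤ n ∧ i ≠ j ∧
  (∀ h, h < l → RPone d f x ε (i + h) (j + h)) ∧
  (0 < i → 0 < j → ¬ RPone d f x ε (i - 1) (j - 1)) ∧
  (max i j + l < n → ¬ RPone d f x ε (i + l) (j + l))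

/-- `N_l(x, n, ε)`: the number of diagonal lines of length exactly `l`. -/
noncomputable def Nlines (n : ℕ) (ε : ℝ) (l : ℕ) : ℕ :=
  Set.ncard {p : ℕ × ℕ | IsLine d f x n ε p.1 p.2 l}

/-- `P_l(x, n, ε) = N_l/(n² − n)`. -/
noncomputable def Pline (n : ℕ) (ε : ℝ) (l : ℕ) : ℝ :=
  (Nlines d f x n ε l : ℝ) / ((n : ℝ) ^ 2 - (n : ℝ))

/-- `P≥_ℓ(x, n, ε) = Σ_{l ≥ ℓ} P_l`. -/
noncomputable def PlineGe (n : ℕ) (ε : ℝ) (ℓ : ℕ) : ℝ :=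
  ∑' k : ℕ, Pline d f x n ε (ℓ + k)

/-- The recurrence rate `RR_ℓ(x, n, ε) = Σ_{l ≥ ℓ} l · P_l`. -/
noncomputable def RRate (n : ℕ) (ε : ℝ) (ℓ : ℕ) : ℝ :=
  ∑' k : ℕ, ((ℓ + k : ℕ) : ℝ) * Pline d f x n ε (ℓ + k)

/-- The determinism `DET_ℓ(x, n, ε) = RR_ℓ/RR_1`. -/
noncomputable def DETrm (n : ℕ) (ε : ℝ) (ℓ : ℕ) : ℝ :=
  RRate d f x n ε ℓ / RRate d f x n ε 1

/-- The average line length `L_ℓ(x, n, ε) = RR_ℓ/P≥_ℓ`. -/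
noncomputable def LAvg (n : ℕ) (ε : ℝ) (ℓ : ℕ) : ℝ :=
  RRate d f x n ε ℓ / PlineGe d f x n ε ℓ

/-- The entropy of line lengths
`ENT_ℓ(x, n, ε) = log P≥_ℓ − (1/P≥_ℓ)·Σ_{l≥ℓ} P_l · log P_l` (with `0·log 0 = 0`). -/
noncomputable def ENTln (n : ℕ) (ε : ℝ) (ℓ : ℕ) : ℝ :=
  Real.log (PlineGe d f x n ε ℓ) -
    (PlineGe d f x n ε ℓ)⁻¹ *
      ∑' k : ℕ, Pline d f x n ε (ℓ + k) * Real.log (Pline d f x n ε (ℓ + k))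

/-- The correlation sum
`C_ℓ(x, n, ε) = n^{-2}·#{(i,j) ∈ [0,n)² : d_ℓ(f^i x, f^j x) ≤ ε}`,
where `d_ℓ` is the Bowen metric. -/
noncomputable def corrSum (ℓ n : ℕ) (ε : ℝ) : ℝ :=
  (Set.ncard {p : ℕ × ℕ | p.1 < n ∧ p.2 < n ∧
      ∀ k, k < ℓ → d (f^[p.1 + k] x) (f^[p.2 + k] x) ≤ ε} : ℝ) / (n : ℝ) ^ 2

end RQAdefs

/-- The extension of a substitution to a morphism of the free monoid of finite words. -/
def substWord (ζ : Bool → List Bool) : List Bool → List Bool :=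
  fun w => w.foldr (fun a r => ζ a ++ r) []

/-- `ζ` is a (binary) substitution of constant length `q ≥ 2`. -/
def IsConstLenSubst (ζ : Bool → List Bool) (q : ℕ) : Prop :=
  2 ≤ q ∧ ∀ a : Bool, (ζ a).length = q

/-- The language `L_ζ`: subwords of the words `ζ^k(a)`, `a ∈ A`, `k ≥ 1`. -/
def substLang (ζ : Bool → List Bool) : Set (List Bool) :=
  {w | ∃ a : Bool, ∃ k : ℕ, 1 ≤ k ∧ w <:+: (substWord ζ)^[k] [a]}

/-- The substitution subshift `X_ζ`. -/
def SubstShift (ζ : Bool → List Bool) : Set (ℕ → Bool) :=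
  {y | ∀ n : ℕ, (List.ofFn fun t : Fin n => y (t : ℕ)) ∈ substLang ζ}

/-- `ζ` is primitive. -/
def IsPrimitive (ζ : Bool → List Bool) : Prop :=
  ∃ k : ℕ, 1 ≤ k ∧ ∀ a b : Bool, b ∈ (substWord ζ)^[k] [a]

/-- `ζ` is aperiodic: `X_ζ` contains a non-periodic sequence. -/
def IsAperiodic (ζ : Bool → List Bool) : Prop :=
  ∃ y ∈ SubstShift ζ, ∀ p : ℕ, 1 ≤ p → ∃ i : ℕ, y (i + p) ≠ y i

/-- The action of a constant length-`q` substitution on infinite sequences. -/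
def substSeq (ζ : Bool → List Bool) (q : ℕ) (x : ℕ → Bool) : ℕ → Bool :=
  fun i => (ζ (x (i / q))).getD (i % q) false

/-- `(i, j, l)` is a line in the infinite symbolic recurrence plot `RP(x, ∞, ε₀)`. -/
def IsInfLine (x : ℕ → Bool) (i j l : ℕ) : Prop :=
  1 ≤ l ∧ i ≠ j ∧ (∀ h, h < l → x (i + h) = x (j + h)) ∧
  (0 < i → 0 < j → x (i - 1) ≠ x (j - 1)) ∧ x (i + l) ≠ x (j + l)

/-- `K_l`: the set of starting points `(i,j)`, `i,j ≥ 1`, of inner lines of length `l`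
in the infinite symbolic recurrence plot. -/
def Kset (x : ℕ → Bool) (l : ℕ) : Set (ℕ × ℕ) :=
  {p | 1 ≤ p.1 ∧ 1 ≤ p.2 ∧ IsInfLine x p.1 p.2 l}

/-- `#(M ∩ [0,n)²)/n²`. -/
noncomputable def densCount (M : Set (ℕ × ℕ)) (n : ℕ) : ℝ :=
  (Set.ncard (M ∩ {p : ℕ × ℕ | p.1 < n ∧ p.2 < n}) : ℝ) / (n : ℝ) ^ 2

/-- `M ⊆ ℕ²` has asymptotic density `a`. -/
def HasDens (M : Set (ℕ × ℕ)) (a : ℝ) : Prop :=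
  Tendsto (densCount M) atTop (𝓝 a)

/-- `δ_l(n) = #(K_l ∩ [1,n)²)/(n² − n)`. -/
noncomputable def deltaK (x : ℕ → Bool) (l n : ℕ) : ℝ :=
  (Set.ncard (Kset x l ∩ {p : ℕ × ℕ | p.1 < n ∧ p.2 < n}) : ℝ) / ((n : ℝ) ^ 2 - (n : ℝ))

/-- `M` is a minimal subset of the subshift `Y`. -/
def IsMinimalSubset (Y M : Set (ℕ → Bool)) : Prop :=
  M ⊆ Y ∧ M.Nonempty ∧ IsClosed M ∧ (∀ z ∈ M, shift z ∈ M) ∧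
  ∀ M' : Set (ℕ → Bool), M' ⊆ M → M'.Nonempty → IsClosed M' →
    (∀ z ∈ M', shift z ∈ M') → M' = M

end RQA

open RQA

/-!
The lines of length `l` are the maximal segments of length `l` on the diagonals of the recurrence
plot, so their number is the second difference in `l` of the number of all segments of length `l`.
Summation by parts turns `RR_ℓ` into a combination of two segment counts. For an embedded symbolic
sequence a segment is a pair of positions at which two windows of the sequence coincide; writing
`C w` for the asymptotic density of coincidences of windows of length `w + 1`, the asymptotic
determinism at a scale `ε` is `(ℓ C (w + ℓ - 1) - (ℓ - 1) C (w + ℓ)) / C w`, where `w → ∞` as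
`ε → 0`. It remains to see that `C` exists and that `C (w + 1) / C w → 1`.

The densities exist because every word has a frequency in `y`: its frequencies in `ζᵏ(0)` and
`ζᵏ(1)` are averages, up to an error `O(q⁻ᵏ)`, of those in `ζᵏ⁻¹(0)` and `ζᵏ⁻¹(1)`, and this
averaging is a contraction unless `ζ(0)` and `ζ(1)` are two different constant words, in which
case `y` is constant.

The second differences of `C` are limits of line counts, hence nonnegative, so Olivier's theorem
gives `C w - C (w + 1) = o(1 / w)`. On the other hand `y` has only `O(w)` windows of length `w`,
whence `C w ≥ κ / (w + 1)` by the Cauchy-Schwarz inequality.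
-/

namespace RQA

open scoped Function

section RecurrencePlot

variable {R : ℕ → ℕ → Prop} {n l : ℕ}

/-- `R` holds along the diagonal stretch of length `l` that starts at `(i, j)`; for the relation
of a recurrence plot this says that the Bowen distance `d_l` of the two points is at most `ε`. -/
def DiagRun (R : ℕ → ℕ → Prop) (l i j : ℕ) : Prop := ∀ h < l, R (i + h) (j + h)

lemma diagRun_diagRun (R : ℕ → ℕ → Prop) (w l : ℕ) :
    DiagRun (DiagRun R (w + 1)) (l + 1) = DiagRun R (w + l + 1) := by
  ext i j
  refine ⟨fun run h hh => ?_, fun run h hh t ht => ?_⟩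
  · simpa only [add_assoc, Nat.add_sub_cancel' (min_le_left h l)] using
      run (min h l) (by omega) (h - min h l) (by omega)
  · simpa only [add_assoc] using run (h + t) (by omega)

/-- The starting points of the off-diagonal, not necessarily maximal, diagonal segments of length
`l` in the `n × n` plot of `R`. -/
def segments (R : ℕ → ℕ → Prop) (n l : ℕ) : Set (ℕ × ℕ) :=
  {p | p.1 ≠ p.2 ∧ p.1 + l ≤ n ∧ p.2 + l ≤ n ∧ DiagRun R l p.1 p.2}

lemma finite_segments (R : ℕ → ℕ → Prop) (n l : ℕ) : (segments R n l).Finite :=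
  ((Set.finite_Iic n).prod (Set.finite_Iic n)).subset
    fun _ ⟨_, hi, hj, _⟩ => ⟨(Nat.le_add_right _ l).trans hi, (Nat.le_add_right _ l).trans hj⟩

lemma segments_eq_empty (h : n < l) : segments R n l = ∅ :=
  Set.eq_empty_of_forall_notMem fun _ ⟨_, hi, _, _⟩ => by omega

lemma segments_succ_subset : segments R n (l + 1) ⊆ segments R n l :=
  fun _ ⟨hne, hi, hj, run⟩ => ⟨hne, by omega, by omega, fun h hh => run h (by omega)⟩

lemma succ_mem_segments_iff {p : ℕ × ℕ} :
    p + 1 ∈ segments R n l ∧ R p.1 p.2 ↔ p ∈ segments R n (l + 1) := by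
  constructor
  · rintro ⟨⟨hne, hi, hj, run⟩, h0⟩
    simp only [Prod.fst_add, Prod.fst_one, Prod.snd_add, Prod.snd_one] at hne hi hj run
    refine ⟨by omega, by omega, by omega, fun h hh => ?_⟩
    cases h with
    | zero => exact h0
    | succ h => simpa only [add_assoc, add_comm 1] using run h (by omega)
  · rintro ⟨hne, hi, hj, run⟩
    refine ⟨⟨?_, ?_, ?_, fun h hh => ?_⟩, run 0 (by omega)⟩
    · simpa using hne
    · simp only [Prod.fst_add, Prod.fst_one]; omega
    · simp only [Prod.snd_add, Prod.snd_one]; omega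
    · simpa only [Prod.fst_add, Prod.fst_one, Prod.snd_add, Prod.snd_one, add_assoc,
        add_comm 1] using run (h + 1) (by omega)

lemma image_succ_segments_subset : (· + 1) '' segments R n (l + 1) ⊆ segments R n l :=
  Set.image_subset_iff.2 fun _ hp => (succ_mem_segments_iff.2 hp).1

lemma segments_inter_image_succ :
    segments R n (l + 1) ∩ (· + 1) '' segments R n (l + 1) =
      (· + 1) '' segments R n (l + 2) := by
  refine Set.Subset.antisymm ?_
    (Set.subset_inter image_succ_segments_subset (Set.image_mono segments_succ_subset))
  rintro _ ⟨hsucc, p, hp, rfl⟩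
  exact ⟨p, succ_mem_segments_iff.1 ⟨hsucc, (succ_mem_segments_iff.2 hp).2⟩, rfl⟩

lemma ncard_maximal_segments (R : ℕ → ℕ → Prop) (n l : ℕ) :
    ((segments R n l \ (segments R n (l + 1) ∪ (· + 1) '' segments R n (l + 1))).ncard : ℝ) =
      (segments R n l).ncard - 2 * (segments R n (l + 1)).ncard
        + (segments R n (l + 2)).ncard := by
  have hdiff := Set.ncard_sdiff_add_ncard_of_subset
    (Set.union_subset segments_succ_subset image_succ_segments_subset) (finite_segments R n l)
  have hunion := Set.ncard_union_add_ncard_inter (segments R n (l + 1))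
    ((· + 1) '' segments R n (l + 1)) (finite_segments R n _) ((finite_segments R n _).image _)
  simp only [segments_inter_image_succ,
    Set.ncard_image_of_injective _ (add_left_injective (1 : ℕ × ℕ))] at hunion
  rify at hdiff hunion
  linarith

lemma ncard_segments_convex (R : ℕ → ℕ → Prop) (n l : ℕ) :
    0 ≤ ((segments R n l).ncard : ℝ) - 2 * (segments R n (l + 1)).ncard
      + (segments R n (l + 2)).ncard :=
  ncard_maximal_segments R n l ▸ Nat.cast_nonneg _

variable {X : Type*} (d : X → X → ℝ) (f : X → X) (x : X) (ε : ℝ)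

lemma setOf_isLine_eq (n l : ℕ) :
    {p : ℕ × ℕ | IsLine d f x n ε p.1 p.2 (l + 1)} =
      segments (RPone d f x ε) n (l + 1) \ (segments (RPone d f x ε) n (l + 2) ∪
        (· + 1) '' segments (RPone d f x ε) n (l + 2)) := by
  ext ⟨i, j⟩
  constructor
  · rintro ⟨-, hi, hj, hne, run, before, after⟩
    refine ⟨⟨hne, hi, hj, run⟩, ?_⟩
    rintro (⟨-, hi', hj', run'⟩ | ⟨p, hp, hpij⟩)
    · exact after (by omega) (run' (l + 1) (by omega))
    · obtain ⟨rfl, rfl⟩ := Prod.mk.inj hpij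
      exact before (Nat.succ_pos _) (Nat.succ_pos _) (succ_mem_segments_iff.2 hp).2
  · rintro ⟨⟨hne, hi, hj, run⟩, maximal⟩
    refine ⟨by omega, hi, hj, hne, run, fun hi0 hj0 before => ?_, fun hmax after => ?_⟩
    · have hij : ((i - 1, j - 1) : ℕ × ℕ) + 1 = (i, j) :=
        Prod.ext (Nat.sub_add_cancel hi0) (Nat.sub_add_cancel hj0)
      refine maximal (.inr ⟨(i - 1, j - 1), succ_mem_segments_iff.1 ⟨?_, before⟩, hij⟩)
      exact hij ▸ ⟨hne, hi, hj, run⟩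
    · refine maximal (.inl ⟨hne, by simp only; omega, by simp only; omega, fun h hh => ?_⟩)
      rcases Nat.lt_succ_iff_lt_or_eq.1 hh with hh | rfl
      · exact run h hh
      · exact after

lemma Pline_succ_eq (n l : ℕ) :
    Pline d f x n ε (l + 1) =
      ((segments (RPone d f x ε) n (l + 1)).ncard -
        2 * (segments (RPone d f x ε) n (l + 2)).ncard +
        (segments (RPone d f x ε) n (l + 3)).ncard) / ((n : ℝ) ^ 2 - n) := by
  rw [Pline, Nlines, setOf_isLine_eq, ncard_maximal_segments]

-- Summation by parts: `N_l` is the second difference of the number of segments of length `l`.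
lemma RRate_succ_eq (n ℓ : ℕ) :
    RRate d f x n ε (ℓ + 1) =
      ((ℓ + 1) * (segments (RPone d f x ε) n (ℓ + 1)).ncard -
        ℓ * (segments (RPone d f x ε) n (ℓ + 2)).ncard) / ((n : ℝ) ^ 2 - n) := by
  let S : ℕ → ℝ := fun l => (segments (RPone d f x ε) n l).ncard
  let G : ℕ → ℝ := fun k =>
    ((ℓ + k + 1) * S (ℓ + k + 1) - (ℓ + k) * S (ℓ + k + 2)) / ((n : ℝ) ^ 2 - n)
  have hterm (k : ℕ) :
      ((ℓ + 1 + k : ℕ) : ℝ) * Pline d f x n ε (ℓ + 1 + k) = G k - G (k + 1) := by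
    rw [add_right_comm, Pline_succ_eq]
    simp only [G, S, ← add_assoc]
    push_cast
    ring
  have hG {k : ℕ} (hk : n ≤ k) : G k = 0 := by
    simp only [G, S]
    rw [segments_eq_empty (by omega), segments_eq_empty (by omega)]
    simp
  calc RRate d f x n ε (ℓ + 1) = ∑ k ∈ Finset.range n, (G k - G (k + 1)) := by
        rw [RRate, tsum_congr hterm, tsum_eq_sum]
        intro k hk
        rw [Finset.mem_range, not_lt] at hk
        rw [hG hk, hG (hk.trans k.le_succ), sub_zero]
    _ = G 0 := by rw [Finset.sum_range_sub', hG le_rfl, sub_zero]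
    _ = _ := by simp [G, S]

end RecurrencePlot

section Density

variable {R : ℕ → ℕ → Prop} {c : ℕ → ℝ}

lemma ncard_segments_add (hR : ∀ i, R i i) (n l : ℕ) :
    (segments R (n + l) (l + 1)).ncard + n =
      ({p | DiagRun R (l + 1) p.1 p.2} ∩ {p : ℕ × ℕ | p.1 < n ∧ p.2 < n}).ncard := by
  have hunion : {p | DiagRun R (l + 1) p.1 p.2} ∩ {p : ℕ × ℕ | p.1 < n ∧ p.2 < n} =
      segments R (n + l) (l + 1) ∪ (fun i => (i, i)) '' Set.Iio n := by
    ext ⟨i, j⟩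
    constructor
    · rintro ⟨run, hi, hj⟩
      rcases eq_or_ne i j with rfl | hne
      · exact .inr ⟨i, hi, rfl⟩
      · exact .inl ⟨hne, by simp only at hi ⊢; omega, by simp only at hj ⊢; omega, run⟩
    · rintro (⟨-, hi, hj, run⟩ | ⟨i, hi, hij⟩)
      · exact ⟨run, by simp only at hi ⊢; omega, by simp only at hj ⊢; omega⟩
      · obtain ⟨rfl, rfl⟩ := Prod.mk.inj hij
        exact ⟨fun h _ => hR _, hi, hi⟩
  have hdisj : Disjoint (segments R (n + l) (l + 1)) ((fun i => (i, i)) '' Set.Iio n) :=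
    Set.disjoint_left.2 fun _ ⟨hne, _⟩ ⟨_, _, hii⟩ => hne (by rw [← hii])
  have hdiag : ((fun i : ℕ => (i, i)) '' Set.Iio n).ncard = n := by
    rw [Set.ncard_image_of_injective _ fun _ _ h => congrArg Prod.fst h, Set.ncard_Iio_nat]
  rw [hunion, Set.ncard_union_eq hdisj (finite_segments _ _ _) ((Set.finite_Iio n).image _), hdiag]

lemma tendsto_ncard_segments_div_sq (hR : ∀ i, R i i) {l : ℕ} {c : ℝ}
    (hc : HasDens {p | DiagRun R (l + 1) p.1 p.2} c) :
    Tendsto (fun n : ℕ => ((segments R n (l + 1)).ncard : ℝ) / (n : ℝ) ^ 2) atTop (𝓝 c) := by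
  rw [← tendsto_add_atTop_iff_nat l]
  have hlim := (hc.sub tendsto_one_div_atTop_nhds_zero_nat).mul
    ((tendsto_natCast_div_add_atTop (l : ℝ)).pow 2)
  rw [sub_zero, one_pow, mul_one] at hlim
  refine hlim.congr' ?_
  filter_upwards [eventually_gt_atTop 0] with n hn
  have : (0 : ℝ) < n := by exact_mod_cast hn
  rw [densCount, ← ncard_segments_add hR]
  push_cast
  field_simp
  ring

lemma antitone_of_hasDens_diagRun (hc : ∀ l, HasDens {p | DiagRun R (l + 1) p.1 p.2} (c l)) :
    Antitone c := by
  refine antitone_nat_of_succ_le fun l => le_of_tendsto_of_tendsto' (hc (l + 1)) (hc l) fun n => ?_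
  have hfin : {p : ℕ × ℕ | p.1 < n ∧ p.2 < n}.Finite := (Set.finite_Iio n).prod (Set.finite_Iio n)
  refine div_le_div_of_nonneg_right (Nat.cast_le.2 ?_) (sq_nonneg _)
  exact Set.ncard_le_ncard (Set.inter_subset_inter_left _ fun p run h hh => run h (by omega))
    (hfin.subset Set.inter_subset_right)

lemma antitone_sub_succ_of_hasDens_diagRun (hR : ∀ i, R i i)
    (hc : ∀ l, HasDens {p | DiagRun R (l + 1) p.1 p.2} (c l)) :
    Antitone fun l => c l - c (l + 1) := by
  refine antitone_nat_of_succ_le fun l => ?_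
  have hS (l : ℕ) := tendsto_ncard_segments_div_sq hR (hc l)
  have hnonneg : 0 ≤ c l - 2 * c (l + 1) + c (l + 2) := by
    refine ge_of_tendsto' (((hS l).sub ((hS (l + 1)).const_mul 2)).add (hS (l + 2))) fun n => ?_
    rw [← mul_div_assoc, ← sub_div, ← add_div]
    exact div_nonneg (ncard_segments_convex R n (l + 1)) (sq_nonneg _)
  linarith

lemma tendsto_DETrm {X : Type*} {d : X → X → ℝ} {f : X → X} {x : X} {ε : ℝ}
    (hd : ∀ z, d z z ≤ ε)
    (hc : ∀ l, HasDens {p | DiagRun (RPone d f x ε) (l + 1) p.1 p.2} (c l))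
    (hc0 : c 0 ≠ 0) (ℓ : ℕ) :
    Tendsto (fun n => DETrm d f x n ε (ℓ + 1)) atTop
      (𝓝 (((ℓ + 1) * c ℓ - ℓ * c (ℓ + 1)) / c 0)) := by
  have hS (l : ℕ) := tendsto_ncard_segments_div_sq (fun i => hd (f^[i] x)) (hc l)
  refine ((((hS ℓ).const_mul (ℓ + 1 : ℝ)).sub ((hS (ℓ + 1)).const_mul (ℓ : ℝ))).div
    (hS 0) hc0).congr' ?_
  filter_upwards [eventually_ge_atTop 2] with n hn
  have hn : (2 : ℝ) ≤ n := by exact_mod_cast hn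
  have hsq : (n : ℝ) ^ 2 ≠ 0 := by positivity
  have hoff : (n : ℝ) ^ 2 - n ≠ 0 := by nlinarith
  rw [Pi.div_apply, ← mul_div_assoc, ← mul_div_assoc, ← sub_div, div_div_div_cancel_right₀ hsq,
    DETrm, RRate_succ_eq, ← zero_add 1, RRate_succ_eq, div_div_div_cancel_right₀ hoff]
  simp

end Density

section RealSequences

variable {C : ℕ → ℝ}

-- Olivier's theorem for the series `∑ (C w - C (w + 1))`: the monotone differences of index
-- `w / 2, …, w - 1` sum to `C (w / 2) - C w → 0`, and each of them is at least the `w`-th.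
lemma tendsto_mul_sub_succ_of_antitone_sub (hC : Antitone fun w => C w - C (w + 1)) {c : ℝ}
    (hlim : Tendsto C atTop (𝓝 c)) :
    Tendsto (fun w : ℕ => w * (C w - C (w + 1))) atTop (𝓝 0) := by
  have hnonneg (w : ℕ) : 0 ≤ C w - C (w + 1) := by
    refine hC.le_of_tendsto ?_ w
    simpa using hlim.sub ((tendsto_add_atTop_iff_nat 1).2 hlim)
  have hhalf : Tendsto (fun w : ℕ => 2 * (C (w / 2) - C w)) atTop (𝓝 0) := by
    simpa using ((hlim.comp (Nat.tendsto_div_const_atTop two_ne_zero)).sub hlim).const_mul 2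
  refine squeeze_zero (fun w => mul_nonneg w.cast_nonneg (hnonneg w)) (fun w => ?_) hhalf
  have htail : ((w - w / 2 : ℕ) : ℝ) * (C w - C (w + 1)) ≤ C (w / 2) - C w :=
    calc ((w - w / 2 : ℕ) : ℝ) * (C w - C (w + 1))
        ≤ ∑ i ∈ Finset.Ico (w / 2) w, (C i - C (i + 1)) := by
          rw [← Nat.card_Ico, ← nsmul_eq_mul]
          exact Finset.card_nsmul_le_sum _ _ _ fun i hi => hC (Finset.mem_Ico.1 hi).2.le
      _ = C (w / 2) - C w := by
          rw [Finset.sum_Ico_eq_sub _ (Nat.div_le_self w 2), Finset.sum_range_sub',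
            Finset.sum_range_sub', sub_sub_sub_cancel_left]
  have hcard : (w : ℝ) ≤ 2 * (w - w / 2 : ℕ) := by exact_mod_cast (by omega)
  calc (w : ℝ) * (C w - C (w + 1))
      ≤ 2 * (w - w / 2 : ℕ) * (C w - C (w + 1)) := by gcongr; exact hnonneg w
    _ ≤ 2 * (C (w / 2) - C w) := by linarith

lemma tendsto_succ_div_self_of_antitone_sub (hC : Antitone fun w => C w - C (w + 1)) {c : ℝ}
    (hlim : Tendsto C atTop (𝓝 c)) {κ : ℝ} (hκ : 0 < κ) (hlow : ∀ w : ℕ, κ ≤ (w + 1) * C w) :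
    Tendsto (fun w => C (w + 1) / C w) atTop (𝓝 1) := by
  have hpos (w : ℕ) : 0 < C w := pos_of_mul_pos_right (hκ.trans_le (hlow w)) (by positivity)
  have hdiff : Tendsto (fun w => C w - C (w + 1)) atTop (𝓝 0) := by
    simpa using hlim.sub ((tendsto_add_atTop_iff_nat 1).2 hlim)
  have hbound : Tendsto (fun w : ℕ => (w + 1) * (C w - C (w + 1)) / κ) atTop (𝓝 0) := by
    simpa [add_mul] using
      ((tendsto_mul_sub_succ_of_antitone_sub hC hlim).add hdiff).div_const κ
  have hgap : Tendsto (fun w => 1 - C (w + 1) / C w) atTop (𝓝 0) := by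
    refine squeeze_zero (fun w => ?_) (fun w => ?_) hbound
    · rw [sub_nonneg, div_le_one (hpos w), ← sub_nonneg]
      exact hC.le_of_tendsto hdiff w
    · rw [one_sub_div (hpos w).ne', div_le_div_iff₀ (hpos w) hκ, mul_right_comm, mul_comm]
      exact mul_le_mul_of_nonneg_right (hlow w) (hC.le_of_tendsto hdiff w)
  simpa using hgap.const_sub 1

lemma tendsto_add_div_self (hne : ∀ w, C w ≠ 0)
    (hC : Tendsto (fun w => C (w + 1) / C w) atTop (𝓝 1)) (j : ℕ) :
    Tendsto (fun w => C (w + j) / C w) atTop (𝓝 1) := by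
  induction j with
  | zero => simp [div_self (hne _)]
  | succ j ih =>
    simpa [← add_assoc, div_mul_div_cancel₀ (hne _)] using
      ((tendsto_add_atTop_iff_nat j).2 hC).mul ih

lemma tendsto_div_of_forall_abs_sub_le {a : ℕ → ℝ} {f : ℝ}
    (h : ∀ δ > 0, ∃ K : ℝ, ∀ n : ℕ, |a n - n * f| ≤ K + δ * n) :
    Tendsto (fun n : ℕ => a n / n) atTop (𝓝 f) := by
  rw [Metric.tendsto_nhds]
  intro ε hε
  obtain ⟨K, hK⟩ := h (ε / 2) (half_pos hε)
  have hKn : Tendsto (fun n : ℕ => K / n) atTop (𝓝 0) :=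
    tendsto_const_nhds.div_atTop tendsto_natCast_atTop_atTop
  filter_upwards [hKn.eventually_lt_const (half_pos hε), eventually_gt_atTop 0] with n hKn hn
  have hn : (0 : ℝ) < n := by exact_mod_cast hn
  rw [div_lt_iff₀ hn] at hKn
  rw [Real.dist_eq, div_sub' hn.ne', abs_div, abs_of_pos hn, div_lt_iff₀ hn]
  linarith [hK n]

lemma summable_of_succ_le_mul_add {u c : ℕ → ℝ} {r : ℝ} (hu : ∀ k, 0 ≤ u k) (hr : r < 1)
    (hc : Summable c) (hc0 : ∀ k, 0 ≤ c k) (h : ∀ k, u (k + 1) ≤ r * u k + c k) :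
    Summable u := by
  refine summable_of_sum_range_le (c := (u 0 + ∑' k, c k) / (1 - r)) hu fun n => ?_
  have hsucc : ∑ k ∈ Finset.range n, u k ≤ u 0 + ∑ k ∈ Finset.range n, u (k + 1) := by
    rw [add_comm, ← Finset.sum_range_succ', Finset.sum_range_succ]
    exact le_add_of_nonneg_right (hu n)
  have hstep : ∑ k ∈ Finset.range n, u (k + 1) ≤
      r * ∑ k ∈ Finset.range n, u k + ∑ k ∈ Finset.range n, c k := by
    rw [Finset.mul_sum, ← Finset.sum_add_distrib]
    exact Finset.sum_le_sum fun k _ => h k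
  have hsum : ∑ k ∈ Finset.range n, c k ≤ ∑' k, c k := hc.sum_le_tsum _ fun k _ => hc0 k
  rw [le_div_iff₀ (by linarith)]
  linarith

-- The gap `|a k true - a k false|` contracts by the factor `|e true - e false|`, so it is summable.
lemma exists_tendsto_of_near_interpolation {a : ℕ → Bool → ℝ} {e : Bool → ℝ} {c : ℕ → ℝ}
    (hc : Summable c) (he : |e true - e false| < 1)
    (ha : ∀ k b, |a (k + 1) b - (a k false + e b * (a k true - a k false))| ≤ c k) :
    ∃ f, ∀ b, Tendsto (fun k => a k b) atTop (𝓝 f) := by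
  let gap : ℕ → ℝ := fun k => a k true - a k false
  have hc0 (k : ℕ) : 0 ≤ c k := (abs_nonneg _).trans (ha k true)
  have hgap : Summable fun k => |gap k| := by
    refine summable_of_succ_le_mul_add (fun _ => abs_nonneg _) he (hc.mul_left 2)
      (fun k => mul_nonneg zero_le_two (hc0 k)) fun k => ?_
    calc |gap (k + 1)|
        = |(e true - e false) * gap k + (a (k + 1) true - (a k false + e true * gap k))
            - (a (k + 1) false - (a k false + e false * gap k))| := by
          simp only [gap]; ring_nf
      _ ≤ |(e true - e false) * gap k| + |a (k + 1) true - (a k false + e true * gap k)|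
            + |a (k + 1) false - (a k false + e false * gap k)| :=
          (abs_sub _ _).trans (add_le_add_left (abs_add_le _ _) _)
      _ ≤ |e true - e false| * |gap k| + 2 * c k := by
          rw [abs_mul]; linarith [ha k true, ha k false]
  have hcauchy : CauchySeq fun k => a k false := by
    refine cauchySeq_of_dist_le_of_summable (fun k => |e false| * |gap k| + c k) (fun k => ?_)
      ((hgap.mul_left _).add hc)
    calc dist (a k false) (a (k + 1) false)
        = |e false * gap k + (a (k + 1) false - (a k false + e false * gap k))| := by
          rw [dist_comm, Real.dist_eq]; ring_nf
      _ ≤ |e false| * |gap k| + c k := by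
          rw [← abs_mul]; exact (abs_add_le _ _).trans (add_le_add_right (ha k false) _)
  obtain ⟨f, hf⟩ := cauchySeq_tendsto_of_complete hcauchy
  have hgap0 : Tendsto gap atTop (𝓝 0) :=
    (tendsto_zero_iff_abs_tendsto_zero _).2 hgap.tendsto_atTop_zero
  refine ⟨f, Bool.rec hf ?_⟩
  simpa [gap] using hf.add hgap0

end RealSequences

section SymbolicDeterminism

variable {α : Type*}

lemma shift_iterate_apply (x : ℕ → α) (i j : ℕ) : shift^[i] x j = x (i + j) := by
  induction i generalizing x with
  | zero => simp
  | succ i ih => rw [Function.iterate_succ_apply, ih, shift, add_right_comm]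

lemma embedSeq_eq_iff (x : ℕ → α) (w i j : ℕ) :
    embedSeq w x i = embedSeq w x j ↔ DiagRun (Eq on x) w i j :=
  funext_iff.trans ⟨fun heq h hh => heq ⟨h, hh⟩, fun run t => run t t.2⟩

/-- The number of initial letters on which two sequences must agree in order to be `ε`-close, that
is the least `k` with `2⁻ᵏ ≤ ε`. -/
noncomputable def agreementLength (ε : ℝ) : ℕ := ⌈Real.logb 2 ε⁻¹⌉₊

lemma agreementLength_le_iff {ε : ℝ} (hε : 0 < ε) (k : ℕ) :
    agreementLength ε ≤ k ↔ (2 : ℝ) ^ (-(k : ℤ)) ≤ ε := by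
  rw [agreementLength, Nat.ceil_le, Real.logb_le_iff_le_rpow one_lt_two (inv_pos.2 hε),
    Real.rpow_natCast, zpow_neg, zpow_natCast, inv_le_comm₀ hε (by positivity)]

lemma agreementLength_pos {ε : ℝ} (hε : 0 < ε) (hε1 : ε < 1) : 0 < agreementLength ε := by
  refine Nat.pos_of_ne_zero fun h => hε1.not_ge ?_
  simpa using (agreementLength_le_iff hε 0).1 h.le

lemma tendsto_agreementLength : Tendsto agreementLength (𝓝[>] 0) atTop :=
  tendsto_nat_ceil_atTop.comp ((Real.tendsto_logb_atTop one_lt_two).comp tendsto_inv_nhdsGT_zero)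

lemma seqDist_le_iff (x y : ℕ → α) {ε : ℝ} (hε : 0 < ε) :
    seqDist x y ≤ ε ↔ ∀ i < agreementLength ε, x i = y i := by
  unfold seqDist
  split_ifs with hxy
  · simp [hxy, hε.le]
  · have hne : {i | x i ≠ y i}.Nonempty := Function.ne_iff.1 hxy
    rw [← agreementLength_le_iff hε, le_csInf_iff' hne]
    exact ⟨fun h i hi => by_contra fun hi' => hi.not_ge (h hi'),
      fun h i hi => not_lt.1 fun hlt => hi (h i hlt)⟩

lemma RPone_embedSeq (x : ℕ → α) (m : ℕ) {ε : ℝ} (hε : 0 < ε) (hε1 : ε < 1) :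
    RPone seqDist shift (embedSeq (m + 1) x) ε =
      DiagRun (Eq on x) (m + (agreementLength ε - 1) + 1) := by
  rw [← diagRun_diagRun, Nat.sub_add_cancel (agreementLength_pos hε hε1)]
  ext i j
  simp only [RPone, seqDist_le_iff _ _ hε, shift_iterate_apply, embedSeq_eq_iff, DiagRun]

variable {x : ℕ → α} {C : ℕ → ℝ}

lemma tendsto_DETrm_embedSeq
    (hC : ∀ w, HasDens {p | DiagRun (Eq on x) (w + 1) p.1 p.2} (C w)) (hC0 : ∀ w, C w ≠ 0)
    (m ℓ : ℕ) {ε : ℝ} (hε : 0 < ε) (hε1 : ε < 1) :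
    Tendsto (fun n => DETrm seqDist shift (embedSeq (m + 1) x) n ε (ℓ + 1)) atTop
      (𝓝 (((ℓ + 1) * C (m + (agreementLength ε - 1) + ℓ) -
        ℓ * C (m + (agreementLength ε - 1) + (ℓ + 1))) / C (m + (agreementLength ε - 1)))) := by
  refine tendsto_DETrm (c := fun l => C (m + (agreementLength ε - 1) + l))
    (fun z => by simp [seqDist, hε.le]) (fun l => ?_) (hC0 _) ℓ
  rw [RPone_embedSeq x m hε hε1, diagRun_diagRun]
  exact hC _

lemma exists_tendsto_DETrm_embedSeq
    (hC : ∀ w, HasDens {p | DiagRun (Eq on x) (w + 1) p.1 p.2} (C w))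
    {κ : ℝ} (hκ : 0 < κ) (hlow : ∀ w : ℕ, κ ≤ (w + 1) * C w)
    (m ℓ : ℕ) : ∃ D : ℝ → ℝ,
      (∀ ε, 0 < ε → ε < 1 → Tendsto
        (fun n => DETrm seqDist shift (embedSeq (m + 1) x) n ε (ℓ + 1)) atTop (𝓝 (D ε))) ∧
      Tendsto D (𝓝[>] 0) (𝓝 1) := by
  have hpos (w : ℕ) : 0 < C w := pos_of_mul_pos_right (hκ.trans_le (hlow w)) (by positivity)
  have hlim := tendsto_atTop_ciInf (antitone_of_hasDens_diagRun hC)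
    ⟨0, Set.forall_mem_range.2 fun w => (hpos w).le⟩
  have hratio := tendsto_add_div_self (fun w => (hpos w).ne')
    (tendsto_succ_div_self_of_antitone_sub
      (antitone_sub_succ_of_hasDens_diagRun (R := Eq on x) (fun _ => rfl) hC) hlim hκ hlow)
  let E : ℕ → ℝ := fun w => ((ℓ + 1) * C (w + ℓ) - ℓ * C (w + (ℓ + 1))) / C w
  have hE : Tendsto E atTop (𝓝 1) := by
    simpa [E, sub_div, mul_div_assoc] using
      ((hratio ℓ).const_mul (ℓ + 1 : ℝ)).sub ((hratio (ℓ + 1)).const_mul (ℓ : ℝ))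
  have hwindow : Tendsto (fun ε => m + (agreementLength ε - 1)) (𝓝[>] 0) atTop :=
    tendsto_atTop_mono (fun ε => Nat.le_add_left _ m)
      ((tendsto_sub_atTop_nat 1).comp tendsto_agreementLength)
  exact ⟨fun ε => E (m + (agreementLength ε - 1)),
    fun ε hε hε1 => tendsto_DETrm_embedSeq hC (fun w => (hpos w).ne') m ℓ hε hε1,
    hE.comp hwindow⟩

end SymbolicDeterminism

section Coincidences

variable {β : Type*} [DecidableEq β]

lemma ncard_coincidences (φ : ℕ → β) {n : ℕ} {t : Finset β} (ht : ∀ i < n, φ i ∈ t) :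
    ({p : ℕ × ℕ | φ p.1 = φ p.2} ∩ {p | p.1 < n ∧ p.2 < n}).ncard =
      ∑ u ∈ t, Nat.count (φ · = u) n ^ 2 := by
  let square : Finset (ℕ × ℕ) :=
    (Finset.range n ×ˢ Finset.range n).filter fun p => φ p.1 = φ p.2
  have hsquare : {p : ℕ × ℕ | φ p.1 = φ p.2} ∩ {p | p.1 < n ∧ p.2 < n} = square := by
    ext p; simp [square, and_comm]
  rw [hsquare, Set.ncard_coe_finset,
    Finset.card_eq_sum_card_fiberwise (f := fun p => φ p.1) (t := t) fun p hp => ?maps]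
  case maps =>
    simp only [square, Finset.coe_filter, Finset.mem_product, Finset.mem_range,
      Set.mem_ofPred_eq] at hp
    exact ht _ hp.1.1
  refine Finset.sum_congr rfl fun u _ => ?_
  rw [Nat.count_eq_card_filter_range, sq, ← Finset.card_product]
  congr 1
  ext p
  simp only [square, Finset.mem_filter, Finset.mem_product, Finset.mem_range]
  grind

lemma sq_le_card_image_mul_ncard_coincidences (φ : ℕ → β) (n : ℕ) :
    n ^ 2 ≤ ((Finset.range n).image φ).card *
      ({p : ℕ × ℕ | φ p.1 = φ p.2} ∩ {p | p.1 < n ∧ p.2 < n}).ncard := by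
  rw [ncard_coincidences φ fun i hi => Finset.mem_image_of_mem φ (Finset.mem_range.2 hi)]
  have hsum : ∑ u ∈ (Finset.range n).image φ, Nat.count (φ · = u) n = n := by
    simp only [Nat.count_eq_card_filter_range]
    rw [← Finset.card_eq_sum_card_image, Finset.card_range]
  conv_lhs => rw [← hsum]
  exact sq_sum_le_card_mul_sum_sq

lemma hasDens_coincidences [Fintype β] {φ : ℕ → β} {f : β → ℝ}
    (hf : ∀ u, Tendsto (fun n => (Nat.count (φ · = u) n : ℝ) / n) atTop (𝓝 (f u))) :
    HasDens {p | φ p.1 = φ p.2} (∑ u, f u ^ 2) := by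
  refine (tendsto_finsetSum _ fun u _ => (hf u).pow 2).congr fun n => ?_
  rw [densCount, ncard_coincidences φ fun i _ => Finset.mem_univ (φ i)]
  push_cast
  simp only [div_pow, Finset.sum_div]

lemma one_le_mul_of_hasDens_coincidences {φ : ℕ → β} {c : ℝ}
    (hc : HasDens {p | φ p.1 = φ p.2} c) {N : ℕ}
    (hN : ∀ n, ((Finset.range n).image φ).card ≤ N) : 1 ≤ N * c := by
  refine ge_of_tendsto (hc.const_mul (N : ℝ)) ?_
  filter_upwards [eventually_gt_atTop 0] with n hn
  rw [densCount, ← mul_div_assoc, one_le_div (by positivity)]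
  exact_mod_cast (sq_le_card_image_mul_ncard_coincidences φ n).trans
    (Nat.mul_le_mul_right _ (hN n))

end Coincidences

section Occurrences

variable {α : Type*} [DecidableEq α] {w : ℕ}

/-- The number of occurrences of the word `u` in `x` that start before position `n`; they may
extend beyond `n`. -/
def occ (u : Fin w → α) (x : ℕ → α) (n : ℕ) : ℕ := Nat.count (fun i => embedSeq w x i = u) n

lemma occ_le (u : Fin w → α) (x : ℕ → α) (n : ℕ) : occ u x n ≤ n :=
  Nat.count_le _

lemma occ_add (u : Fin w → α) (x : ℕ → α) (a b : ℕ) :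
    occ u x (a + b) = occ u x a + occ u (shift^[a] x) b := by
  have hwindow (i : ℕ) : embedSeq w (shift^[a] x) i = embedSeq w x (a + i) := by
    ext t; simp only [embedSeq, shift_iterate_apply, add_assoc]
  simp only [occ, Nat.count_add, hwindow]

lemma occ_le_occ_add {x x' : ℕ → α} {L : ℕ} (h : ∀ i < L, x i = x' i) (u : Fin w → α) :
    occ u x L ≤ occ u x' L + w := by
  rcases le_total L w with hL | hL
  · exact (occ_le u x L).trans (hL.trans (Nat.le_add_left _ _))
  · have hcongr : occ u x (L - w) = occ u x' (L - w) := by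
      simp only [occ, Nat.count_eq_card_filter_range]
      refine congrArg Finset.card (Finset.filter_congr fun i hi => ?_)
      rw [Finset.mem_range] at hi
      have hwindow : embedSeq w x i = embedSeq w x' i := funext fun t => h _ (by omega)
      rw [hwindow]
    rw [← Nat.sub_add_cancel hL, occ_add, occ_add, hcongr]
    have := occ_le u (shift^[L - w] x) w
    omega

lemma abs_occ_sub_occ_le {x x' : ℕ → α} {L : ℕ} (h : ∀ i < L, x i = x' i) (u : Fin w → α) :
    |(occ u x L : ℝ) - occ u x' L| ≤ w := by
  have hle : (occ u x L : ℝ) ≤ occ u x' L + w := by exact_mod_cast occ_le_occ_add h u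
  have hge : (occ u x' L : ℝ) ≤ occ u x L + w := by
    exact_mod_cast occ_le_occ_add (fun i hi => (h i hi).symm) u
  exact abs_sub_le_iff.2 ⟨by linarith, by linarith⟩

lemma abs_occ_sub_mul_le (u : Fin w → α) (x : ℕ → α) (n : ℕ) {f : ℝ} (hf : f ∈ Set.Icc 0 1) :
    |(occ u x n : ℝ) - n * f| ≤ n := by
  have hocc : (occ u x n : ℝ) ≤ n := by exact_mod_cast occ_le u x n
  have hnf : n * f ≤ n := mul_le_of_le_one_right n.cast_nonneg hf.2
  exact abs_sub_le_iff.2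
    ⟨by linarith [mul_nonneg n.cast_nonneg hf.1], by linarith [(occ u x n).cast_nonneg (α := ℝ)]⟩

-- Each of the `r` blocks sees at most `w` windows that cross its right end.
lemma abs_occ_mul_sub_sum_le {x : ℕ → α} {B : ℕ → ℕ → α} {L r : ℕ}
    (hx : ∀ t < r, ∀ i < L, x (L * t + i) = B t i) (u : Fin w → α) :
    |(occ u x (L * r) : ℝ) - ∑ t ∈ Finset.range r, (occ u (B t) L : ℝ)| ≤ r * w := by
  induction r with
  | zero => simp [occ]
  | succ r ih =>
    have hprev := ih fun t ht => hx t (by omega)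
    have hlast : |(occ u (shift^[L * r] x) L : ℝ) - occ u (B r) L| ≤ w :=
      abs_occ_sub_occ_le (fun i hi => by rw [shift_iterate_apply, hx r r.lt_succ_self i hi]) u
    rw [Nat.mul_succ, occ_add, Finset.sum_range_succ]
    push_cast
    rw [add_sub_add_comm, add_one_mul]
    exact (abs_add_le _ _).trans (add_le_add hprev hlast)

lemma abs_occ_sub_mul_le_of_blocks {x : ℕ → α} {B : ℕ → ℕ → α} {L : ℕ} (hL : 0 < L)
    (hx : ∀ t, ∀ i < L, x (L * t + i) = B t i) {u : Fin w → α} {f δ : ℝ} (hf : f ∈ Set.Icc 0 1)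
    (hB : ∀ t, |(occ u (B t) L : ℝ) - L * f| ≤ L * δ) (n : ℕ) :
    |(occ u x n : ℝ) - n * f| ≤ L + n * (w / L + δ) := by
  let r := n / L
  let e := n % L
  have hn : L * r + e = n := Nat.div_add_mod n L
  have hδ : 0 ≤ L * δ := (abs_nonneg _).trans (hB 0)
  have : (0 : ℝ) < L := by exact_mod_cast hL
  have hblocks : |∑ t ∈ Finset.range r, ((occ u (B t) L : ℝ) - L * f)| ≤ r * (L * δ) := by
    refine (Finset.abs_sum_le_sum_abs _ _).trans ?_
    simpa using Finset.sum_le_card_nsmul (Finset.range r) _ _ fun t _ => hB t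
  have hrest : |(occ u (shift^[L * r] x) e : ℝ) - e * f| ≤ L :=
    (abs_occ_sub_mul_le u _ e hf).trans (by exact_mod_cast (Nat.mod_lt n hL).le)
  have hr : (r : ℝ) ≤ n / L := Nat.cast_div_le
  have hcross := abs_occ_mul_sub_sum_le (fun t (_ : t < r) => hx t) u
  calc |(occ u x n : ℝ) - n * f|
      = |((occ u x (L * r) : ℝ) - ∑ t ∈ Finset.range r, (occ u (B t) L : ℝ))
          + ∑ t ∈ Finset.range r, ((occ u (B t) L : ℝ) - L * f)
          + ((occ u (shift^[L * r] x) e : ℝ) - e * f)| := by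
        rw [← hn, occ_add, Finset.sum_sub_distrib, Finset.sum_const, Finset.card_range,
          nsmul_eq_mul]
        push_cast
        ring_nf
    _ ≤ r * w + r * (L * δ) + L := (abs_add_three _ _ _).trans (by gcongr)
    _ = L + r * (w + L * δ) := by ring
    _ ≤ L + n / L * (w + L * δ) := by gcongr
    _ = L + n * (w / L + δ) := by field_simp

lemma abs_occ_sub_mul_le_of_shift {x y : ℕ → α} {s n : ℕ} (h : ∀ i < n, y i = x (s + i))
    (u : Fin w → α) {f b : ℝ} (hf : f ∈ Set.Icc 0 1)
    (hx : |(occ u x (s + n) : ℝ) - (s + n : ℕ) * f| ≤ b) :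
    |(occ u y n : ℝ) - n * f| ≤ w + b + s := by
  have hshift : |(occ u y n : ℝ) - occ u (shift^[s] x) n| ≤ w :=
    abs_occ_sub_occ_le (fun i hi => by rw [h i hi, shift_iterate_apply]) u
  calc |(occ u y n : ℝ) - n * f|
      = |((occ u y n : ℝ) - occ u (shift^[s] x) n)
          + ((occ u x (s + n) : ℝ) - (s + n : ℕ) * f) + (s * f - occ u x s)| := by
        rw [occ_add]; push_cast; ring_nf
    _ ≤ w + b + s := by
        refine (abs_add_three _ _ _).trans (add_le_add_three hshift hx ?_)
        rw [abs_sub_comm]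
        exact abs_occ_sub_mul_le u x s hf

end Occurrences

section Substitution

variable {ζ : Bool → List Bool} {q : ℕ}

lemma iterate_substSeq_congr {x x' : ℕ → Bool} {k i : ℕ} (h : x (i / q ^ k) = x' (i / q ^ k)) :
    (substSeq ζ q)^[k] x i = (substSeq ζ q)^[k] x' i := by
  induction k generalizing i with
  | zero => simpa using h
  | succ k ih =>
    rw [pow_succ', ← Nat.div_div_eq_div_mul] at h
    rw [Function.iterate_succ_apply', Function.iterate_succ_apply', substSeq, substSeq, ih h]

lemma iterate_substSeq_mul_add (hq : 0 < q) (x : ℕ → Bool) (k t i : ℕ) :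
    (substSeq ζ q)^[k] x (q ^ k * t + i) = (substSeq ζ q)^[k] (shift^[t] x) i := by
  induction k generalizing i with
  | zero => simp [shift_iterate_apply]
  | succ k ih =>
    rw [Function.iterate_succ_apply', Function.iterate_succ_apply', substSeq, substSeq, pow_succ',
      mul_assoc, Nat.mul_add_div hq, Nat.mul_add_mod, ih]

lemma iterate_substSeq_block (hq : 0 < q) (x : ℕ → Bool) {k i : ℕ} (t : ℕ) (hi : i < q ^ k) :
    (substSeq ζ q)^[k] x (q ^ k * t + i) = (substSeq ζ q)^[k] (fun _ => x t) i := by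
  rw [iterate_substSeq_mul_add hq]
  refine iterate_substSeq_congr ?_
  rw [Nat.div_eq_of_lt hi, shift_iterate_apply, add_zero]

lemma length_substWord (hlen : ∀ a, (ζ a).length = q) (v : List Bool) :
    (substWord ζ v).length = q * v.length := by
  induction v with
  | nil => rfl
  | cons a v ih =>
    change (ζ a ++ substWord ζ v).length = _
    rw [List.length_append, hlen, ih, List.length_cons, mul_add_one, add_comm]

lemma length_iterate_substWord (hlen : ∀ a, (ζ a).length = q) (k : ℕ) (v : List Bool) :
    ((substWord ζ)^[k] v).length = q ^ k * v.length := by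
  induction k with
  | zero => simp
  | succ k ih => rw [Function.iterate_succ_apply', length_substWord hlen, ih, pow_succ', mul_assoc]

lemma getD_substWord (hlen : ∀ a, (ζ a).length = q) {v : List Bool} {i : ℕ}
    (hi : i < q * v.length) :
    (substWord ζ v).getD i false = substSeq ζ q (v.getD · false) i := by
  induction v generalizing i with
  | nil => simp at hi
  | cons a v ih =>
    change (ζ a ++ substWord ζ v).getD i false = _
    rcases lt_or_ge i q with hiq | hiq
    · rw [List.getD_append _ _ _ _ (hiq.trans_eq (hlen a).symm), substSeq, Nat.div_eq_of_lt hiq,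
        Nat.mod_eq_of_lt hiq, List.getD_cons_zero]
    · obtain ⟨j, rfl⟩ := Nat.exists_eq_add_of_le hiq
      rw [List.length_cons, mul_add_one] at hi
      rw [List.getD_append_right _ _ _ _ (by rw [hlen]; omega), hlen, Nat.add_sub_cancel_left,
        ih (by omega), substSeq, substSeq, Nat.add_div_left _ (by grind), Nat.add_mod_left,
        List.getD_cons_succ]

lemma getD_iterate_substWord (hlen : ∀ a, (ζ a).length = q) {k i : ℕ} {v : List Bool}
    (hi : i < q ^ k * v.length) :
    ((substWord ζ)^[k] v).getD i false = (substSeq ζ q)^[k] (v.getD · false) i := by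
  induction k generalizing i with
  | zero => rfl
  | succ k ih =>
    rw [pow_succ', mul_assoc] at hi
    rw [Function.iterate_succ_apply', Function.iterate_succ_apply',
      getD_substWord hlen (by rwa [length_iterate_substWord hlen]), substSeq, substSeq,
      ih (Nat.div_lt_of_lt_mul hi)]

lemma exists_eq_iterate_substSeq_const (hlen : ∀ a, (ζ a).length = q) {y : ℕ → Bool}
    (hy : y ∈ SubstShift ζ) (n : ℕ) :
    ∃ K a s, s + n ≤ q ^ K ∧ ∀ i < n, y i = (substSeq ζ q)^[K] (fun _ => a) (s + i) := by
  obtain ⟨a, K, -, pre, post, happend⟩ := hy n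
  have hlength := congrArg List.length happend
  rw [length_iterate_substWord hlen] at hlength
  simp only [List.length_append, List.length_ofFn, List.length_singleton, mul_one] at hlength
  refine ⟨K, a, pre.length, by omega, fun i hi => ?_⟩
  have hK : pre.length + i < q ^ K := by omega
  calc y i = ((substWord ζ)^[K] [a]).getD (pre.length + i) false := by
        rw [← happend, List.append_assoc, List.getD_append_right _ _ _ _ (Nat.le_add_right _ _),
          Nat.add_sub_cancel_left, List.getD_append _ _ _ _ (by simpa using hi)]
        simp [hi]
    _ = (substSeq ζ q)^[K] ([a].getD · false) (pre.length + i) :=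
        getD_iterate_substWord hlen (by simpa using hK)
    _ = (substSeq ζ q)^[K] (fun _ => a) (pre.length + i) :=
        iterate_substSeq_congr (by simp [Nat.div_eq_of_lt hK])

lemma exists_eq_iterate_substSeq (hζ : IsConstLenSubst ζ q) {y : ℕ → Bool} (hy : y ∈ SubstShift ζ)
    (k n : ℕ) : ∃ s < q ^ k, ∃ z, ∀ i < n, y i = (substSeq ζ q)^[k] z (s + i) := by
  have hq : 0 < q := by have := hζ.1; omega
  obtain ⟨K, a, s, hs, hy⟩ := exists_eq_iterate_substSeq_const hζ.2 hy (n + q ^ k)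
  obtain ⟨j, rfl⟩ : ∃ j, K = k + j :=
    Nat.exists_eq_add_of_le ((Nat.pow_le_pow_iff_right hζ.1).1 (by omega))
  refine ⟨s % q ^ k, Nat.mod_lt _ (by positivity),
    shift^[s / q ^ k] ((substSeq ζ q)^[j] fun _ => a), fun i hi => ?_⟩
  rw [← iterate_substSeq_mul_add hq, ← add_assoc, Nat.div_add_mod, ← Function.iterate_add_apply]
  exact hy i (by omega)

end Substitution

section Frequencies

lemma sum_range_bool (x : ℕ → Bool) (g : Bool → ℝ) (n : ℕ) :
    ∑ t ∈ Finset.range n, g (x t) = n * g false + Nat.count (x ·) n * (g true - g false) := by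
  induction n with
  | zero => simp
  | succ n ih =>
    have hlast : g (x n) = g false + (if x n then 1 else 0) * (g true - g false) := by
      cases x n <;> simp
    rw [Finset.sum_range_succ, ih, Nat.count_succ, hlast]
    push_cast
    ring

variable (ζ : Bool → List Bool) (q : ℕ) {w : ℕ}

/-- The proportion of the letter `true` in the word `ζ(b)`, read off its periodic repetition. -/
noncomputable def trueFreq (b : Bool) : ℝ := Nat.count (substSeq ζ q (fun _ => b) ·) q / q

/-- The frequency of occurrences of `u` that start in the word `ζᵏ(b)`; the occurrences that cross
its right end are read in the periodic repetition of that word. -/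
noncomputable def blockFreq (u : Fin w → Bool) (k : ℕ) (b : Bool) : ℝ :=
  occ u ((substSeq ζ q)^[k] fun _ => b) (q ^ k) / q ^ k

lemma trueFreq_mem_Icc (b : Bool) : trueFreq ζ q b ∈ Set.Icc 0 1 :=
  ⟨by unfold trueFreq; positivity,
    div_le_one_of_le₀ (by exact_mod_cast Nat.count_le _) (by positivity)⟩

lemma blockFreq_mem_Icc (u : Fin w → Bool) (k : ℕ) (b : Bool) :
    blockFreq ζ q u k b ∈ Set.Icc 0 1 :=
  ⟨by unfold blockFreq; positivity,
    div_le_one_of_le₀ (by exact_mod_cast occ_le u _ _) (by positivity)⟩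

variable {ζ q}

lemma exists_substSeq_const_eq_const {b : Bool} (hq : 0 < q)
    (hb : trueFreq ζ q b = 0 ∨ trueFreq ζ q b = 1) :
    ∃ c, substSeq ζ q (fun _ => b) = fun _ => c := by
  have hq' : (q : ℝ) ≠ 0 := by exact_mod_cast hq.ne'
  have hmod (i : ℕ) : substSeq ζ q (fun _ => b) i = substSeq ζ q (fun _ => b) (i % q) := by
    simp only [substSeq, Nat.mod_mod]
  rcases hb with hb | hb
  · rw [trueFreq, div_eq_zero_iff, or_iff_left hq', Nat.cast_eq_zero,
      Nat.count_iff_forall_not] at hb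
    exact ⟨false, funext fun i => by simpa [hmod i] using hb (i % q) (Nat.mod_lt i hq)⟩
  · rw [trueFreq, div_eq_one_iff_eq hq', Nat.cast_inj, Nat.count_iff_forall] at hb
    exact ⟨true, funext fun i => by simpa [hmod i] using hb _ (Nat.mod_lt i hq)⟩

lemma abs_trueFreq_sub_lt_one_or_forall_exists_eq_const (hq : 0 < q) :
    |trueFreq ζ q true - trueFreq ζ q false| < 1 ∨
      ∀ b, ∃ c, substSeq ζ q (fun _ => b) = fun _ => c := by
  refine or_iff_not_imp_left.2 fun hgap b => exists_substSeq_const_eq_const hq ?_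
  obtain ⟨hfalse0, hfalse1⟩ := trueFreq_mem_Icc ζ q false
  obtain ⟨htrue0, htrue1⟩ := trueFreq_mem_Icc ζ q true
  rcases le_abs.1 (not_lt.1 hgap) with h | h <;> cases b <;>
    first | exact .inl (by linarith) | exact .inr (by linarith)

lemma abs_blockFreq_succ_sub_le (hq : 0 < q) (u : Fin w → Bool) (k : ℕ) (b : Bool) :
    |blockFreq ζ q u (k + 1) b - (blockFreq ζ q u k false +
      trueFreq ζ q b * (blockFreq ζ q u k true - blockFreq ζ q u k false))| ≤
        w * (1 / q) ^ k := by
  have : (0 : ℝ) < q := by exact_mod_cast hq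
  let x := substSeq ζ q fun _ => b
  let N : Bool → ℝ := fun c => occ u ((substSeq ζ q)^[k] fun _ => c) (q ^ k)
  have hblocks : |(occ u ((substSeq ζ q)^[k] x) (q ^ k * q) : ℝ) -
      ∑ t ∈ Finset.range q, N (x t)| ≤ q * w :=
    abs_occ_mul_sub_sum_le (fun t _ i hi => iterate_substSeq_block hq x t hi) u
  rw [sum_range_bool] at hblocks
  have hscale : blockFreq ζ q u (k + 1) b - (blockFreq ζ q u k false +
      trueFreq ζ q b * (blockFreq ζ q u k true - blockFreq ζ q u k false)) =
        (occ u ((substSeq ζ q)^[k] x) (q ^ k * q) -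
          (q * N false + Nat.count (x ·) q * (N true - N false))) / (q ^ k * q) := by
    simp only [blockFreq, trueFreq, Function.iterate_succ_apply, pow_succ, N, x]
    field_simp
  rw [hscale, abs_div, abs_of_pos (by positivity : (0 : ℝ) < q ^ k * q),
    div_le_iff₀ (by positivity), one_div, inv_pow]
  field_simp
  linarith

lemma exists_tendsto_blockFreq (hq : 1 < q)
    (hgap : |trueFreq ζ q true - trueFreq ζ q false| < 1) (u : Fin w → Bool) :
    ∃ f, ∀ b, Tendsto (fun k => blockFreq ζ q u k b) atTop (𝓝 f) := by
  have hq' : (1 : ℝ) < q := by exact_mod_cast hq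
  refine exists_tendsto_of_near_interpolation ?_ hgap
    (abs_blockFreq_succ_sub_le (zero_lt_one.trans hq) u)
  exact (summable_geometric_of_lt_one (by positivity)
    ((div_lt_one (zero_lt_one.trans hq')).2 hq')).mul_left _

lemma tendsto_occ_div_of_tendsto_blockFreq (hζ : IsConstLenSubst ζ q) {y : ℕ → Bool}
    (hy : y ∈ SubstShift ζ) {u : Fin w → Bool} {f : ℝ}
    (hf : ∀ b, Tendsto (fun k => blockFreq ζ q u k b) atTop (𝓝 f)) :
    Tendsto (fun n => (occ u y n : ℝ) / n) atTop (𝓝 f) := by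
  have hq : 1 < q := hζ.1
  have hq' : (1 : ℝ) < q := by exact_mod_cast hq
  have hfIcc : f ∈ Set.Icc 0 1 :=
    isClosed_Icc.mem_of_tendsto (hf true) (.of_forall fun k => blockFreq_mem_Icc ζ q u k true)
  refine tendsto_div_of_forall_abs_sub_le fun δ hδ => ?_
  have hcross : Tendsto (fun k => (w : ℝ) / q ^ k) atTop (𝓝 0) :=
    tendsto_const_nhds.div_atTop (tendsto_pow_atTop_atTop_of_one_lt hq')
  have hnear : ∀ᶠ k in atTop, ∀ b, |blockFreq ζ q u k b - f| < δ / 2 :=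
    eventually_all.2 fun b => Metric.tendsto_nhds.1 (hf b) _ (half_pos hδ)
  obtain ⟨k, hcross, hnear⟩ := ((hcross.eventually_lt_const (half_pos hδ)).and hnear).exists
  have hL : 0 < q ^ k := by positivity
  have hblock (b : Bool) :
      |(occ u ((substSeq ζ q)^[k] fun _ => b) (q ^ k) : ℝ) - (q ^ k : ℕ) * f| ≤
        (q ^ k : ℕ) * (δ / 2) := by
    have hpow : (0 : ℝ) < q ^ k := by positivity
    have hb := (hnear b).le
    rw [blockFreq, div_sub' hpow.ne', abs_div, abs_of_pos hpow, div_le_iff₀' hpow] at hb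
    exact_mod_cast hb
  refine ⟨w + 2 * q ^ k + q ^ k * δ, fun n => ?_⟩
  obtain ⟨s, hs, z, hz⟩ := exists_eq_iterate_substSeq hζ hy k n
  have hs : (s : ℝ) ≤ q ^ k := by exact_mod_cast hs.le
  have hbound := abs_occ_sub_mul_le_of_shift hz u hfIcc
    (abs_occ_sub_mul_le_of_blocks hL
      (fun t i => iterate_substSeq_block (zero_lt_one.trans hq) z t) hfIcc
      (fun t => hblock (z t)) (s + n))
  push_cast at hbound
  have hslope : (s + n : ℝ) * (w / q ^ k + δ / 2) ≤ (q ^ k + n) * δ :=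
    mul_le_mul (by linarith) (by linarith) (by positivity) (by positivity)
  linarith

lemma exists_eq_const_of_mem_substShift {y : ℕ → Bool} (hlen : ∀ a, (ζ a).length = q)
    (hy : y ∈ SubstShift ζ) (hconst : ∀ b, ∃ c, substSeq ζ q (fun _ => b) = fun _ => c) :
    ∃ c, y = fun _ => c := by
  have hiter (k : ℕ) (b : Bool) : ∃ c, (substSeq ζ q)^[k] (fun _ => b) = fun _ => c := by
    induction k with
    | zero => exact ⟨b, rfl⟩
    | succ k ih =>
      obtain ⟨c, hc⟩ := ih
      rw [Function.iterate_succ_apply', hc]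
      exact hconst c
  refine ⟨y 0, funext fun i => ?_⟩
  obtain ⟨K, a, s, -, hya⟩ := exists_eq_iterate_substSeq_const hlen hy (i + 1)
  obtain ⟨c, hc⟩ := hiter K a
  rw [hya i i.lt_succ_self, hya 0 i.succ_pos, hc]

lemma tendsto_occ_const_div {α : Type*} [DecidableEq α] (u : Fin w → α) (c : α) :
    Tendsto (fun n => (occ u (fun _ => c) n : ℝ) / n) atTop
      (𝓝 (if u = fun _ => c then 1 else 0)) := by
  refine tendsto_div_of_forall_abs_sub_le fun δ hδ => ⟨0, fun n => ?_⟩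
  have hocc : (occ u (fun _ => c) n : ℝ) = n * if u = fun _ => c then 1 else 0 := by
    have hwindow (i : ℕ) : embedSeq w (fun _ => c) i = fun _ => c := rfl
    simp only [occ, hwindow, eq_comm (b := u)]
    split_ifs with hu <;> simp [hu]
  rw [hocc, sub_self, abs_zero, zero_add]
  positivity

lemma exists_tendsto_occ_div (hζ : IsConstLenSubst ζ q) {y : ℕ → Bool} (hy : y ∈ SubstShift ζ)
    (u : Fin w → Bool) : ∃ f : ℝ, Tendsto (fun n => (occ u y n : ℝ) / n) atTop (𝓝 f) := by
  rcases abs_trueFreq_sub_lt_one_or_forall_exists_eq_const (ζ := ζ) (zero_lt_two.trans_le hζ.1)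
    with hgap | hconst
  · obtain ⟨f, hf⟩ := exists_tendsto_blockFreq hζ.1 hgap u
    exact ⟨f, tendsto_occ_div_of_tendsto_blockFreq hζ hy hf⟩
  · obtain ⟨c, rfl⟩ := exists_eq_const_of_mem_substShift hζ.2 hy hconst
    exact ⟨_, tendsto_occ_const_div u c⟩

end Frequencies

section WindowDensity

variable {ζ : Bool → List Bool} {q : ℕ} {y : ℕ → Bool}

lemma setOf_diagRun_eq {α : Type*} (x : ℕ → α) (w : ℕ) :
    {p : ℕ × ℕ | DiagRun (Eq on x) w p.1 p.2} = {p | embedSeq w x p.1 = embedSeq w x p.2} := by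
  simp only [embedSeq_eq_iff]

lemma exists_hasDens_diagRun (hζ : IsConstLenSubst ζ q) (hy : y ∈ SubstShift ζ) (w : ℕ) :
    ∃ c, HasDens {p | DiagRun (Eq on y) w p.1 p.2} c := by
  choose f hf using exists_tendsto_occ_div (w := w) hζ hy
  rw [setOf_diagRun_eq]
  exact ⟨_, hasDens_coincidences hf⟩

-- A window of length at most `q ^ k` meets at most two consecutive blocks `ζᵏ(a)`, `ζᵏ(b)`.
lemma card_image_embedSeq_le (hζ : IsConstLenSubst ζ q) (hy : y ∈ SubstShift ζ) {w k : ℕ}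
    (hw : w ≤ q ^ k) (n : ℕ) : ((Finset.range n).image (embedSeq w y)).card ≤ 4 * q ^ k := by
  have hq : 0 < q := zero_lt_two.trans_le hζ.1
  obtain ⟨s, -, z, hz⟩ := exists_eq_iterate_substSeq hζ hy k (n + w)
  let window : Bool × Bool × Fin (q ^ k) → Fin w → Bool := fun ⟨a, b, r⟩ h =>
    (substSeq ζ q)^[k] (fun t => if t = 0 then a else b) (r + h)
  calc ((Finset.range n).image (embedSeq w y)).card
      ≤ (Finset.univ.image window).card := Finset.card_le_card fun v hv => ?_
    _ ≤ Fintype.card (Bool × Bool × Fin (q ^ k)) := Finset.card_image_le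
    _ = 4 * q ^ k := by simp [← mul_assoc]
  obtain ⟨i, hi, rfl⟩ := Finset.mem_image.1 hv
  rw [Finset.mem_range] at hi
  let t := (s + i) / q ^ k
  have hmod : (s + i) % q ^ k < q ^ k := Nat.mod_lt _ (by positivity)
  refine Finset.mem_image.2 ⟨(z t, z (t + 1), ⟨(s + i) % q ^ k, hmod⟩), Finset.mem_univ _, ?_⟩
  ext h
  have hsplit : embedSeq w y i h =
      (substSeq ζ q)^[k] (shift^[t] z) ((s + i) % q ^ k + h) := by
    rw [← iterate_substSeq_mul_add hq, ← add_assoc, Nat.div_add_mod, add_assoc]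
    exact hz _ (by omega)
  rw [hsplit]
  refine iterate_substSeq_congr ?_
  have hlt : ((s + i) % q ^ k + h) / q ^ k < 2 := Nat.div_lt_of_lt_mul (by omega)
  interval_cases ((s + i) % q ^ k + h) / q ^ k <;> simp [shift_iterate_apply, t]

lemma le_succ_mul_of_hasDens_diagRun (hζ : IsConstLenSubst ζ q) (hy : y ∈ SubstShift ζ) {w : ℕ}
    {c : ℝ} (hc : HasDens {p | DiagRun (Eq on y) (w + 1) p.1 p.2} c) :
    1 / (4 * q) ≤ (w + 1) * c := by
  rw [setOf_diagRun_eq] at hc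
  let k := Nat.log q (w + 1) + 1
  have hword : w + 1 ≤ q ^ k := (Nat.lt_pow_succ_log_self hζ.1 _).le
  have hpow : q ^ k ≤ q * (w + 1) := by
    rw [pow_succ']
    exact Nat.mul_le_mul_left q (Nat.pow_log_le_self q w.succ_ne_zero)
  have hone := one_le_mul_of_hasDens_coincidences hc fun n =>
    (card_image_embedSeq_le hζ hy hword n).trans (Nat.mul_le_mul_left 4 hpow)
  have hq : (0 : ℝ) < q := by exact_mod_cast zero_lt_two.trans_le hζ.1
  rw [div_le_iff₀ (by positivity)]
  push_cast at hone
  linarith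

end WindowDensity

end RQA

/-- Limit of determinism: for a uniform binary substitution ζ, every
y ∈ X_ζ and m, ℓ ∈ ℕ, the asymptotic determinism DET_ℓ(y^{(m)},∞,ε) exists for all
sufficiently small ε > 0 and tends to 1 as ε → 0⁺. -/
theorem determinism_tendsto_one
    (ζ : Bool → List Bool) (q : ℕ) (hζ : IsConstLenSubst ζ q)
    (y : ℕ → Bool) (hy : y ∈ SubstShift ζ)
    (m ℓ : ℕ) (hm : 1 ≤ m) (hℓ : 1 ≤ ℓ) :
    ∃ D : ℝ → ℝ, ∃ ε₁ : ℝ, 0 < ε₁ ∧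
      (∀ ε : ℝ, 0 < ε → ε ≤ ε₁ →
        Tendsto (fun n : ℕ => DETrm seqDist shift (embedSeq m y) n ε ℓ) atTop (𝓝 (D ε))) ∧
      Tendsto D (nhdsWithin 0 (Set.Ioi 0)) (𝓝 1) := by
  obtain ⟨m, rfl⟩ := Nat.exists_eq_add_of_le' hm
  obtain ⟨ℓ, rfl⟩ := Nat.exists_eq_add_of_le' hℓ
  choose C hC using fun w => exists_hasDens_diagRun hζ hy (w + 1)
  have hq : (0 : ℝ) < q := by exact_mod_cast zero_lt_two.trans_le hζ.1
  obtain ⟨D, hD, hD1⟩ := exists_tendsto_DETrm_embedSeq hC (κ := 1 / (4 * q)) (by positivity)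
    (fun w => le_succ_mul_of_hasDens_diagRun hζ hy (hC w)) m ℓ
  exact ⟨D, 1 / 2, one_half_pos, fun ε hε hε1 => hD ε hε (hε1.trans_lt one_half_lt_one), hD1⟩
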